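/- arXiv:1605.03433 — 2 statements merged into one kernel-verified Lean document; each statement's English description precedes it below -/
import Mathlib

section
/- Let X be uniformly distributed on [−π, π]. Fix l ∈ ℕ and let m_D = span{φ_j : j = 0, …, 2l} be the space of trigonometric polynomials of degree at most l, of linear dimension D = 2l+1. If m_D satisfies the small-ball condition with constants (β₀, κ₀), then β₀ ≤ 3^{1/4} √2 · κ₀^{−1/2} D^{−3/4}. -/
/-!
The small-ball condition is tested on a single peaked trigonometric polynomial, the unnormalised
Fejér kernel `F n = ∑ m < n, D m` with `n = l + 1`. From `F n x * (1 - cos x) = 1 - cos (n x)` one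
gets `|F n x| ≤ π² / x²` on `[-π, π]`, so `|F n|` exceeds `t` with probability at most `1 / √t`.
On the other hand the Dirichlet kernels `D m` reproduce cosines, whence `⟨D m, D n⟩ = 2 m + 1` for
`m ≤ n` and `‖F n‖₂² = n (2 n² + 1) / 3 ≥ (2 l + 1)³ / 12`; take `t = κ₀ ‖F n‖₂`.
-/

open MeasureTheory

/-- The uniform probability distribution on `[-π, π]`. -/
noncomputable def unifSym : Measure ℝ :=
  (ENNReal.ofReal (2 * Real.pi))⁻¹ • (volume.restrict (Set.Icc (-Real.pi) Real.pi))

/-- The trigonometric system `φ₀ ≡ 1`, `φ_{2k}(x) = √2 cos(kx)`,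
`φ_{2k+1}(x) = √2 sin(kx)` for `k ≥ 1`. -/
noncomputable def trigSym (j : ℕ) (x : ℝ) : ℝ :=
  if j = 0 then 1
  else if Even j then Real.sqrt 2 * Real.cos ((j / 2 : ℕ) * x)
  else Real.sqrt 2 * Real.sin ((j / 2 : ℕ) * x)

/-- The `L²` norm with respect to a measure `μ`. -/
noncomputable def norm2 (μ : Measure ℝ) (f : ℝ → ℝ) : ℝ :=
  Real.sqrt (∫ x, f x ^ 2 ∂μ)

open Real Finset

section UniformMeasure

theorem integral_unifSym (f : ℝ → ℝ) :
    ∫ x, f x ∂unifSym = (2 * π)⁻¹ * ∫ x in (-π)..π, f x := by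
  rw [unifSym, integral_smul_measure, ENNReal.toReal_inv, ENNReal.toReal_ofReal (by positivity),
    integral_Icc_eq_integral_Ioc,
    ← intervalIntegral.integral_of_le (by linarith [pi_pos]), smul_eq_mul]

theorem integrable_unifSym_of_continuous {f : ℝ → ℝ} (hf : Continuous f) :
    Integrable f unifSym :=
  hf.integrableOn_Icc.smul_measure (by simp [pi_pos])

theorem unifSym_real_eq (s : Set ℝ) :
    unifSym.real s = (2 * π)⁻¹ * volume.real (s ∩ Set.Icc (-π) π) := by
  rw [unifSym, measureReal_ennreal_smul_apply, measureReal_restrict_apply' measurableSet_Icc,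
    ENNReal.toReal_inv, ENNReal.toReal_ofReal (by positivity)]

theorem unifSym_real_le_of_subset_Icc {s : Set ℝ} {r : ℝ} (hr : 0 ≤ r)
    (hs : s ∩ Set.Icc (-π) π ⊆ Set.Icc (-r) r) : unifSym.real s ≤ r / π := by
  calc unifSym.real s = (2 * π)⁻¹ * volume.real (s ∩ Set.Icc (-π) π) := unifSym_real_eq s
    _ ≤ (2 * π)⁻¹ * volume.real (Set.Icc (-r) r) := by
      gcongr
      exact measure_Icc_lt_top.ne
    _ = r / π := by
      rw [volume_real_Icc_of_le (by linarith)]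
      field_simp
      ring

theorem unifSym_real_le_abs_le_of_abs_mul_sq_le {f : ℝ → ℝ} {C t : ℝ} (hC : 0 ≤ C) (ht : 0 < t)
    (hf : ∀ x, |x| ≤ π → |f x| * x ^ 2 ≤ C ^ 2) :
    unifSym.real {x | t ≤ |f x|} ≤ C / (π * √t) := by
  rw [mul_comm, ← div_div]
  refine unifSym_real_le_of_subset_Icc (by positivity) fun x ⟨hxt, hxπ⟩ ↦ ?_
  have hsq : (|x| * √t) ^ 2 ≤ C ^ 2 :=
    calc (|x| * √t) ^ 2 = t * x ^ 2 := by rw [mul_pow, sq_abs, sq_sqrt ht.le, mul_comm]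
      _ ≤ |f x| * x ^ 2 := by gcongr; exact hxt
      _ ≤ C ^ 2 := hf x (abs_le.2 hxπ)
  rw [Set.mem_Icc, ← abs_le, le_div_iff₀ (sqrt_pos.2 ht)]
  exact (sq_le_sq₀ (by positivity) hC).1 hsq

theorem integral_cos_int_mul (k : ℤ) : ∫ x, cos (k * x) ∂unifSym = if k = 0 then 1 else 0 := by
  rw [integral_unifSym]
  split_ifs with hk
  · simp only [hk, Int.cast_zero, zero_mul, cos_zero, intervalIntegral.integral_const, smul_eq_mul]
    field_simp
    ring
  · rw [intervalIntegral.integral_comp_mul_left cos (Int.cast_ne_zero.2 hk), integral_cos,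
      mul_neg, sin_neg, sin_int_mul_pi]
    simp

theorem integral_cos_mul_cos (j k : ℤ) :
    ∫ x, cos (j * x) * cos (k * x) ∂unifSym =
      ((if j = k then 1 else 0) + if j = -k then 1 else 0) / 2 := by
  have product_to_sum (x : ℝ) : cos (j * x) * cos (k * x) =
      (cos ((j - k : ℤ) * x) + cos ((j + k : ℤ) * x)) / 2 := by
    push_cast
    rw [sub_mul, add_mul, ← two_mul_cos_mul_cos]
    ring
  simp_rw [product_to_sum]
  rw [integral_div, integral_add (integrable_unifSym_of_continuous (by fun_prop))
    (integrable_unifSym_of_continuous (by fun_prop)), integral_cos_int_mul, integral_cos_int_mul]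
  simp only [sub_eq_zero, add_eq_zero_iff_eq_neg]

end UniformMeasure

section Kernels

/-- The Dirichlet kernel of degree `n`: twice the usual `1/2 + cos x + ⋯ + cos (n x)`, so that its
mean under `unifSym` is `1`. -/
noncomputable def dirichletKernel (n : ℕ) (x : ℝ) : ℝ :=
  1 + 2 * ∑ k ∈ range n, cos ((k + 1 : ℕ) * x)

/-- The Fejér kernel, of degree `n - 1`, without the usual averaging factor `1 / n`. It is the
peaked polynomial on which the small-ball condition is tested. -/
noncomputable def fejerKernel (n : ℕ) (x : ℝ) : ℝ :=
  ∑ m ∈ range n, dirichletKernel m x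

@[fun_prop]
theorem continuous_dirichletKernel (n : ℕ) : Continuous (dirichletKernel n) := by
  unfold dirichletKernel
  fun_prop

@[fun_prop]
theorem continuous_fejerKernel (n : ℕ) : Continuous (fejerKernel n) := by
  unfold fejerKernel
  fun_prop

theorem dirichletKernel_mul_one_sub_cos (n : ℕ) (x : ℝ) :
    dirichletKernel n x * (1 - cos x) = cos (n * x) - cos ((n + 1 : ℕ) * x) := by
  induction n with
  | zero => simp [dirichletKernel]
  | succ n ih =>
    have dirichletKernel_succ :
        dirichletKernel (n + 1) x = dirichletKernel n x + 2 * cos ((n + 1 : ℕ) * x) := by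
      rw [dirichletKernel, dirichletKernel, sum_range_succ]
      ring
    have product_to_sum : 2 * cos ((n + 1 : ℕ) * x) * cos x =
        cos (n * x) + cos ((n + 1 + 1 : ℕ) * x) := by
      rw [two_mul_cos_mul_cos]
      push_cast
      ring_nf
    rw [dirichletKernel_succ, add_mul, ih]
    linear_combination -product_to_sum

theorem fejerKernel_mul_one_sub_cos (n : ℕ) (x : ℝ) :
    fejerKernel n x * (1 - cos x) = 1 - cos (n * x) := by
  simp_rw [fejerKernel, sum_mul, dirichletKernel_mul_one_sub_cos]
  rw [sum_range_sub' fun m : ℕ ↦ cos (m * x)]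
  simp

theorem abs_fejerKernel_mul_sq_le (n : ℕ) {x : ℝ} (hx : |x| ≤ π) :
    |fejerKernel n x| * x ^ 2 ≤ π ^ 2 := by
  have sq_le : x ^ 2 ≤ π ^ 2 / 2 * (1 - cos x) := by
    have := cos_le_one_sub_mul_cos_sq hx
    calc x ^ 2 = π ^ 2 / 2 * (2 / π ^ 2 * x ^ 2) := by field_simp
      _ ≤ π ^ 2 / 2 * (1 - cos x) := by gcongr; linarith
  calc |fejerKernel n x| * x ^ 2
      ≤ |fejerKernel n x| * (π ^ 2 / 2 * (1 - cos x)) := by gcongr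
    _ = π ^ 2 / 2 * |fejerKernel n x * (1 - cos x)| := by
      rw [abs_mul, abs_of_nonneg (sub_nonneg.2 (cos_le_one x))]
      ring
    _ = π ^ 2 / 2 * (1 - cos (n * x)) := by
      rw [fejerKernel_mul_one_sub_cos, abs_of_nonneg (sub_nonneg.2 (cos_le_one _))]
    _ ≤ π ^ 2 / 2 * 2 := by gcongr; linarith [neg_one_le_cos (n * x)]
    _ = π ^ 2 := by ring

theorem unifSym_real_le_abs_fejerKernel_le (n : ℕ) {t : ℝ} (ht : 0 < t) :
    unifSym.real {x | t ≤ |fejerKernel n x|} ≤ 1 / √t := by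
  have h := unifSym_real_le_abs_le_of_abs_mul_sq_le pi_nonneg ht
    fun _ ↦ abs_fejerKernel_mul_sq_le n
  rwa [← div_div, div_self pi_ne_zero] at h

theorem integral_dirichletKernel_mul_cos (n k : ℕ) :
    ∫ x, dirichletKernel n x * cos (k * x) ∂unifSym = if k ≤ n then 1 else 0 := by
  have mean_cos : ∫ x, cos (k * x) ∂unifSym = if k = 0 then 1 else 0 := by
    exact_mod_cast integral_cos_int_mul k
  have two_mul_integral_cos_mul_cos (j : ℕ) :
      2 * ∫ x, cos ((j + 1 : ℕ) * x) * cos (k * x) ∂unifSym = if j + 1 = k then 1 else 0 := by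
    have h := integral_cos_mul_cos (j + 1 : ℕ) k
    rw [if_neg (show ((j + 1 : ℕ) : ℤ) ≠ -k by omega)] at h
    simp only [Int.cast_natCast, Nat.cast_inj] at h
    rw [h]
    ring
  simp_rw [dirichletKernel, add_mul, one_mul, mul_assoc, sum_mul]
  rw [integral_add (integrable_unifSym_of_continuous (by fun_prop))
    (integrable_unifSym_of_continuous (by fun_prop)), integral_const_mul,
    integral_finsetSum _ fun j _ ↦ integrable_unifSym_of_continuous (by fun_prop), mul_sum,
    mean_cos]
  simp_rw [two_mul_integral_cos_mul_cos]
  cases k <;> simp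

theorem integral_dirichletKernel_mul_dirichletKernel {m n : ℕ} (hmn : m ≤ n) :
    ∫ x, dirichletKernel m x * dirichletKernel n x ∂unifSym = 2 * m + 1 := by
  have mul_expand (x : ℝ) : dirichletKernel m x * dirichletKernel n x =
      dirichletKernel n x * cos ((0 : ℕ) * x) +
        2 * ∑ k ∈ range m, dirichletKernel n x * cos ((k + 1 : ℕ) * x) := by
    rw [← mul_sum, dirichletKernel.eq_def m]
    simp only [Nat.cast_zero, zero_mul, cos_zero]
    ring
  have reproducing (k : ℕ) (hk : k ∈ range m) :
      ∫ x, dirichletKernel n x * cos ((k + 1 : ℕ) * x) ∂unifSym = 1 := by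
    rw [integral_dirichletKernel_mul_cos,
      if_pos ((Nat.succ_le_of_lt (mem_range.1 hk)).trans hmn)]
  simp_rw [mul_expand]
  rw [integral_add (integrable_unifSym_of_continuous (by fun_prop))
    (integrable_unifSym_of_continuous (by fun_prop)), integral_const_mul,
    integral_finsetSum _ fun k _ ↦ integrable_unifSym_of_continuous (by fun_prop),
    integral_dirichletKernel_mul_cos, if_pos n.zero_le, sum_congr rfl reproducing]
  simp [add_comm]

theorem integral_fejerKernel_mul_dirichletKernel (n : ℕ) :
    ∫ x, fejerKernel n x * dirichletKernel n x ∂unifSym = n ^ 2 := by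
  have sum_odd : ∑ m ∈ range n, (2 * (m : ℝ) + 1) = n ^ 2 := by
    induction n with
    | zero => simp
    | succ n ih =>
      rw [sum_range_succ, ih]
      push_cast
      ring
  simp_rw [fejerKernel, sum_mul]
  rw [integral_finsetSum _ fun m _ ↦ integrable_unifSym_of_continuous (by fun_prop), ← sum_odd]
  exact sum_congr rfl fun m hm ↦
    integral_dirichletKernel_mul_dirichletKernel (mem_range.1 hm).le

theorem integral_fejerKernel_sq (n : ℕ) :
    ∫ x, fejerKernel n x ^ 2 ∂unifSym = n * (2 * n ^ 2 + 1) / 3 := by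
  induction n with
  | zero => simp [fejerKernel]
  | succ n ih =>
    have sq_expand (x : ℝ) : fejerKernel (n + 1) x ^ 2 =
        fejerKernel n x ^ 2 + 2 * (fejerKernel n x * dirichletKernel n x) +
          dirichletKernel n x * dirichletKernel n x := by
      rw [fejerKernel, sum_range_succ, ← fejerKernel]
      ring
    simp_rw [sq_expand]
    rw [integral_add (integrable_unifSym_of_continuous (by fun_prop))
      (integrable_unifSym_of_continuous (by fun_prop)),
      integral_add (integrable_unifSym_of_continuous (by fun_prop))
      (integrable_unifSym_of_continuous (by fun_prop)), integral_const_mul, ih,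
      integral_fejerKernel_mul_dirichletKernel,
      integral_dirichletKernel_mul_dirichletKernel le_rfl]
    push_cast
    ring

theorem norm2_fejerKernel_sq (n : ℕ) :
    norm2 unifSym (fejerKernel n) ^ 2 = n * (2 * n ^ 2 + 1) / 3 := by
  rw [norm2, sq_sqrt (integral_nonneg fun x ↦ sq_nonneg _), integral_fejerKernel_sq]

theorem norm2_fejerKernel_pos {n : ℕ} (hn : n ≠ 0) : 0 < norm2 unifSym (fejerKernel n) := by
  refine (sqrt_nonneg _).lt_of_ne' ((pow_ne_zero_iff two_ne_zero).1 ?_)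
  rw [← norm2, norm2_fejerKernel_sq]
  positivity

theorem two_mul_add_one_pow_three_le_norm2_fejerKernel_sq (l : ℕ) :
    ((2 * l + 1 : ℕ) : ℝ) ^ 3 ≤ 12 * norm2 unifSym (fejerKernel (l + 1)) ^ 2 := by
  have cube_add : 12 * norm2 unifSym (fejerKernel (l + 1)) ^ 2 =
      ((2 * l + 1 : ℕ) : ℝ) ^ 3 + (12 * l ^ 2 + 22 * l + 11) := by
    rw [norm2_fejerKernel_sq]
    push_cast
    ring
  rw [cube_add]
  exact le_add_of_nonneg_right (by positivity)

end Kernels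

section TrigonometricPolynomials

/-- The space `m_D` of trigonometric polynomials of degree at most `l`, where `D = 2 l + 1`. -/
def trigPolynomials (l : ℕ) : Submodule ℝ (ℝ → ℝ) :=
  Submodule.span ℝ {f : ℝ → ℝ | ∃ j ≤ 2 * l, f = trigSym j}

theorem cos_nat_mul_mem_trigPolynomials {k l : ℕ} (hkl : k ≤ l) :
    (fun x ↦ cos (k * x)) ∈ trigPolynomials l := by
  have trigSym_mem : trigSym (2 * k) ∈ trigPolynomials l :=
    Submodule.subset_span ⟨2 * k, by omega, rfl⟩
  have cos_eq : (fun x ↦ cos (k * x)) = (trigSym (2 * k) 0)⁻¹ • trigSym (2 * k) := by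
    ext x
    rcases eq_or_ne k 0 with rfl | hk <;> simp [trigSym, *]
  rw [cos_eq]
  exact Submodule.smul_mem _ _ trigSym_mem

theorem dirichletKernel_mem_trigPolynomials {n l : ℕ} (hnl : n ≤ l) :
    dirichletKernel n ∈ trigPolynomials l := by
  have eq_sum_cos : dirichletKernel n = (fun x ↦ cos ((0 : ℕ) * x)) +
      (2 : ℝ) • ∑ k ∈ range n, fun x ↦ cos ((k + 1 : ℕ) * x) := by
    ext x
    simp [dirichletKernel]
  rw [eq_sum_cos]
  refine add_mem (cos_nat_mul_mem_trigPolynomials l.zero_le)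
    (Submodule.smul_mem _ _ (sum_mem fun k hk ↦ cos_nat_mul_mem_trigPolynomials ?_))
  exact (Nat.succ_le_of_lt (mem_range.1 hk)).trans hnl

theorem fejerKernel_mem_trigPolynomials {n l : ℕ} (hnl : n ≤ l + 1) :
    fejerKernel n ∈ trigPolynomials l := by
  have eq_sum_dirichletKernel : fejerKernel n = ∑ m ∈ range n, dirichletKernel m := by
    ext x
    rw [fejerKernel, Finset.sum_apply]
  rw [eq_sum_dirichletKernel]
  refine sum_mem fun m hm ↦ dirichletKernel_mem_trigPolynomials ?_
  exact Nat.le_of_lt_succ ((mem_range.1 hm).trans_le hnl)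

end TrigonometricPolynomials

theorem small_ball_bound_pow_four {κ D : ℝ} (hκ : 0 ≤ κ) (hD : 0 ≤ D) :
    ((3 : ℝ) ^ ((1 : ℝ) / 4) * √2 * κ ^ (-(1 : ℝ) / 2) * D ^ (-(3 : ℝ) / 4)) ^ 4 =
      12 / (κ ^ 2 * D ^ 3) := by
  have three_pow : ((3 : ℝ) ^ ((1 : ℝ) / 4)) ^ 4 = 3 := by
    rw [← rpow_mul_natCast zero_le_three]
    norm_num
  have sqrt_two_pow : √2 ^ 4 = 4 := by
    rw [pow_mul √2 2 2, sq_sqrt zero_le_two]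
    norm_num
  have kappa_pow : (κ ^ (-(1 : ℝ) / 2)) ^ 4 = (κ ^ 2)⁻¹ := by
    rw [← rpow_mul_natCast hκ, ← rpow_natCast κ 2, ← rpow_neg hκ]
    norm_num
  have dim_pow : (D ^ (-(3 : ℝ) / 4)) ^ 4 = (D ^ 3)⁻¹ := by
    rw [← rpow_mul_natCast hD, ← rpow_natCast D 3, ← rpow_neg hD]
    norm_num
  rw [mul_pow, mul_pow, mul_pow, three_pow, sqrt_two_pow, kappa_pow, dim_pow]
  ring

theorem one_div_sqrt_mul_le {κ N D : ℝ} (hκ : 0 < κ) (hN : 0 ≤ N) (hD : 0 < D)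
    (hDN : D ^ 3 ≤ 12 * N ^ 2) :
    1 / √(κ * N) ≤
      (3 : ℝ) ^ ((1 : ℝ) / 4) * √2 * κ ^ (-(1 : ℝ) / 2) * D ^ (-(3 : ℝ) / 4) := by
  refine (pow_le_pow_iff_left₀ (by positivity) (by positivity) four_ne_zero).1 ?_
  calc (1 / √(κ * N)) ^ 4 = 12 / (κ ^ 2 * (12 * N ^ 2)) := by
        rw [div_pow, pow_mul √(κ * N) 2 2, sq_sqrt (by positivity), mul_pow]
        field_simp
    _ ≤ 12 / (κ ^ 2 * D ^ 3) := by gcongr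
    _ = _ := (small_ball_bound_pow_four hκ.le hD.le).symm

/-- Let `X` be uniform on `[-π, π]` and let
`m_D = span{φ_j : j = 0, …, 2l}` be the trigonometric polynomials of degree at
most `l`, of dimension `D = 2l + 1`. If `m_D` satisfies the small-ball condition
with constants `(β₀, κ₀)`, then `β₀ ≤ 3^{1/4} √2 κ₀^{-1/2} D^{-3/4}`. -/
theorem fourier_small_ball_upper_bound (l : ℕ) (κ₀ β₀ : ℝ) (hκ₀ : 0 < κ₀) (hβ₀ : 0 < β₀)
    (hSB : ∀ s ∈ Submodule.span ℝ {f : ℝ → ℝ | ∃ j ≤ 2 * l, f = trigSym j},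
      β₀ ≤ (unifSym {x | κ₀ * norm2 unifSym s ≤ |s x|}).toReal) :
    β₀ ≤ (3 : ℝ) ^ ((1 : ℝ) / 4) * Real.sqrt 2 * κ₀ ^ (-(1 : ℝ) / 2) *
      ((2 * l + 1 : ℕ) : ℝ) ^ (-(3 : ℝ) / 4) := by
  have hN : 0 < norm2 unifSym (fejerKernel (l + 1)) := norm2_fejerKernel_pos l.succ_ne_zero
  calc β₀ ≤ unifSym.real {x | κ₀ * norm2 unifSym (fejerKernel (l + 1)) ≤ |fejerKernel (l + 1) x|} :=
        hSB _ (fejerKernel_mem_trigPolynomials le_rfl)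
    _ ≤ 1 / √(κ₀ * norm2 unifSym (fejerKernel (l + 1))) :=
        unifSym_real_le_abs_fejerKernel_le _ (mul_pos hκ₀ hN)
    _ ≤ _ := one_div_sqrt_mul_le hκ₀ hN.le (by positivity)
        (two_mul_add_one_pow_three_le_norm2_fejerKernel_sq l)
end

section
/- Fix ν > 0, L₁, L₂ > 0 and D ≥ (2√2 L₁/L₂)^{1/ν}. Let s* ∈ Λ_ν(L₁, L₂) and let s_m = Σ_{k=1}^D β_k(s*) φ_k be its orthogonal projection onto the span m of the first D trigonometric basis functions. Then ‖s* − s_m‖∞ ≤ √2 L₁ / D^ν ≤ L₂/2, ‖s_m‖∞ ≥ L₂/2, and s_m ∈ Λ_ν(L₁, L₂/2). -/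
open MeasureTheory
open scoped ENNReal

/-- The uniform probability distribution on `[0, 2π]`. -/
noncomputable def unif : Measure ℝ :=
  (ENNReal.ofReal (2 * Real.pi))⁻¹ • (volume.restrict (Set.Icc 0 (2 * Real.pi)))

/-- The trigonometric orthonormal basis of `L²` of the uniform distribution on
`[0, 2π]`: `φ₁ ≡ 1`, `φ_{2k}(x) = √2 cos(kx)`, `φ_{2k+1}(x) = √2 sin(kx)`, `k ≥ 1`. -/
noncomputable def phi (j : ℕ) (x : ℝ) : ℝ :=
  if j = 1 then 1
  else if Even j then Real.sqrt 2 * Real.cos ((j / 2 : ℕ) * x)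
  else Real.sqrt 2 * Real.sin ((j / 2 : ℕ) * x)

/-- The `k`-th Fourier coefficient `β_k(f) = ⟨f, φ_k⟩` of `f`. -/
noncomputable def fourierCoef (f : ℝ → ℝ) (k : ℕ) : ℝ :=
  ∫ x, f x * phi k x ∂unif

/-- The orthogonal projection `s_m = ∑_{k=1}^D β_k(f) φ_k` of `f` onto the span of
the first `D` trigonometric basis functions. -/
noncomputable def trigProj (D : ℕ) (f : ℝ → ℝ) : ℝ → ℝ :=
  fun x => ∑ k ∈ Finset.Icc 1 D, fourierCoef f k * phi k x

/-!
A summable coefficient sequence gives a uniformly convergent trigonometric series, and an integrable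
function is determined a.e. by its Fourier coefficients: trigonometric polynomials are dense in the
continuous functions on the circle, and these include every test function supported in `(0, 2π)`.
Hence `s - s_m` is a.e. the tail `∑_{k > D} β_k φ_k`, where `|φ_k| ≤ √2` and `k ^ ν ≥ D ^ ν`. The
lower bound on `D` makes the resulting estimate at most `L₂ / 2`, so the triangle inequality bounds
`‖s_m‖∞` from below; by orthonormality, the coefficients of `s_m` are those of `s` cut off at `D`.
-/

open Real

theorem toReal_eLpNorm_le_sub_add {α E : Type*} [MeasurableSpace α] [NormedAddCommGroup E]
    {μ : Measure α} {p : ℝ≥0∞} {f g : α → E} (hp : 1 ≤ p) (hf : AEStronglyMeasurable f μ)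
    (hg : AEStronglyMeasurable g μ) (hfg_top : eLpNorm (fun x => f x - g x) p μ ≠ ∞)
    (hg_top : eLpNorm g p μ ≠ ∞) :
    (eLpNorm f p μ).toReal ≤
      (eLpNorm (fun x => f x - g x) p μ).toReal + (eLpNorm g p μ).toReal := by
  rw [← ENNReal.toReal_add hfg_top hg_top]
  refine ENNReal.toReal_mono (ENNReal.add_ne_top.2 ⟨hfg_top, hg_top⟩) ?_
  calc eLpNorm f p μ = eLpNorm ((f - g) + g) p μ := by rw [sub_add_cancel]
    _ ≤ eLpNorm (fun x => f x - g x) p μ + eLpNorm g p μ := eLpNorm_add_le (hf.sub hg) hg hp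

theorem div_rpow_le_of_rpow_one_div_le {a b x ν : ℝ} (ha : 0 ≤ a) (hb : 0 < b) (hν : 0 < ν)
    (h : (a / b) ^ (1 / ν) ≤ x) : a / x ^ ν ≤ b := by
  have hab : 0 ≤ a / b := div_nonneg ha hb.le
  have hx : 0 ≤ x := (rpow_nonneg hab _).trans h
  rw [one_div, rpow_inv_le_iff_of_pos hab hx hν, div_le_iff₀' hb] at h
  exact div_le_of_le_mul₀ (rpow_nonneg hx ν) hb.le h

theorem monotone_natCast_succ_rpow {ν : ℝ} (hν : 0 ≤ ν) :
    Monotone fun k : ℕ => ((k + 1 : ℕ) : ℝ) ^ ν :=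
  fun _ _ hij => rpow_le_rpow (Nat.cast_nonneg _) (by gcongr) hν

theorem mul_tsum_abs_indicator_Ici_le {w c : ℕ → ℝ} (hw : Monotone w) (hw_nonneg : 0 ≤ w 0)
    (hsum : Summable fun k => w k * |c k|) (D : ℕ) :
    w D * ∑' k, |(Set.Ici D).indicator c k| ≤ ∑' k, w k * |c k| := by
  have hnonneg (k : ℕ) : 0 ≤ w k := hw_nonneg.trans (hw k.zero_le)
  have hle (k : ℕ) : w D * |(Set.Ici D).indicator c k| ≤ w k * |c k| := by
    by_cases hk : k ∈ Set.Ici D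
    · rw [Set.indicator_of_mem hk]
      exact mul_le_mul_of_nonneg_right (hw hk) (abs_nonneg _)
    · rw [Set.indicator_of_notMem hk, abs_zero, mul_zero]
      exact mul_nonneg (hnonneg k) (abs_nonneg _)
  rw [← tsum_mul_left]
  exact (hsum.of_nonneg_of_le (fun k => mul_nonneg (hnonneg D) (abs_nonneg _)) hle).tsum_le_tsum
    hle hsum

theorem summable_of_summable_mul_abs {w c : ℕ → ℝ} (hw : Monotone w) (hw_pos : 0 < w 0)
    (hsum : Summable fun k => w k * |c k|) : Summable c :=
  .of_norm_bounded (hsum.mul_left (w 0)⁻¹) fun k => by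
    rw [norm_eq_abs, ← div_eq_inv_mul, le_div_iff₀' hw_pos]
    exact mul_le_mul_of_nonneg_right (hw k.zero_le) (abs_nonneg _)

theorem integral_unif (f : ℝ → ℝ) :
    ∫ x, f x ∂unif = (2 * π)⁻¹ * ∫ x in 0..2 * π, f x := by
  rw [unif, integral_smul_measure, intervalIntegral.integral_of_le two_pi_pos.le,
    integral_Icc_eq_integral_Ioc, ENNReal.toReal_inv, ENNReal.toReal_ofReal two_pi_pos.le,
    smul_eq_mul]

instance isProbabilityMeasure_unif : IsProbabilityMeasure unif where
  measure_univ := by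
    simp only [unif, Measure.smul_apply, Measure.restrict_apply_univ, volume_Icc, sub_zero,
      smul_eq_mul]
    exact ENNReal.inv_mul_cancel (by simp [pi_pos]) ENNReal.ofReal_ne_top

theorem ae_unif_mem_Ioo : ∀ᵐ x ∂unif, x ∈ Set.Ioo 0 (2 * π) := by
  refine Measure.ae_smul_measure ?_ _
  rw [← Measure.restrict_congr_set Ioo_ae_eq_Icc]
  exact ae_restrict_mem measurableSet_Ioo

theorem integrable_unif_of_continuous {f : ℝ → ℝ} (hf : Continuous f) : Integrable f unif :=
  hf.integrableOn_Icc.smul_measure (ENNReal.inv_ne_top.2 (by simp [pi_pos]))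

section TrigonometricIntegrals

theorem integral_cos_intCast_mul_unif (n : ℤ) :
    ∫ x, cos (n * x) ∂unif = if n = 0 then 1 else 0 := by
  split_ifs with hn
  · simp [hn]
  · have hsin : sin (n * (2 * π)) = 0 := by
      simpa [mul_assoc] using sin_int_mul_pi (n * 2)
    rw [integral_unif, intervalIntegral.integral_comp_mul_left cos (Int.cast_ne_zero.2 hn),
      integral_cos]
    simp [hsin]

theorem integral_sin_intCast_mul_unif (n : ℤ) : ∫ x, sin (n * x) ∂unif = 0 := by
  rcases eq_or_ne n 0 with rfl | hn
  · simp
  · rw [integral_unif, intervalIntegral.integral_comp_mul_left sin (Int.cast_ne_zero.2 hn),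
      integral_sin]
    simp [cos_int_mul_two_pi]

theorem integral_cos_mul_cos_unif (m n : ℤ) :
    ∫ x, cos (m * x) * cos (n * x) ∂unif =
      ((if m - n = 0 then 1 else 0) + if m + n = 0 then 1 else 0) / 2 := by
  rw [← integral_cos_intCast_mul_unif, ← integral_cos_intCast_mul_unif, ← integral_add,
    ← integral_div]
  · congr 1 with x
    push_cast
    rw [sub_mul, add_mul, cos_sub, cos_add]
    ring
  all_goals exact integrable_unif_of_continuous (by fun_prop)

theorem integral_sin_mul_sin_unif (m n : ℤ) :
    ∫ x, sin (m * x) * sin (n * x) ∂unif =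
      ((if m - n = 0 then 1 else 0) - if m + n = 0 then 1 else 0) / 2 := by
  rw [← integral_cos_intCast_mul_unif, ← integral_cos_intCast_mul_unif, ← integral_sub,
    ← integral_div]
  · congr 1 with x
    push_cast
    rw [sub_mul, add_mul, cos_sub, cos_add]
    ring
  all_goals exact integrable_unif_of_continuous (by fun_prop)

theorem integral_sin_mul_cos_unif (m n : ℤ) :
    ∫ x, sin (m * x) * cos (n * x) ∂unif = 0 := by
  calc ∫ x, sin (m * x) * cos (n * x) ∂unif
      = ∫ x, (sin ((m + n : ℤ) * x) + sin ((m - n : ℤ) * x)) / 2 ∂unif := by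
        congr 1 with x
        push_cast
        rw [sub_mul, add_mul, sin_sub, sin_add]
        ring
    _ = 0 := by
        rw [integral_div, integral_add, integral_sin_intCast_mul_unif,
          integral_sin_intCast_mul_unif, add_zero, zero_div]
        all_goals exact integrable_unif_of_continuous (by fun_prop)

end TrigonometricIntegrals

section TrigonometricBasis

theorem phi_one (x : ℝ) : phi 1 x = 1 := rfl

theorem phi_two_mul (a : ℕ) (x : ℝ) : phi (2 * a) x = √2 * cos (a * x) := by
  simp [phi]

theorem phi_two_mul_add_one {a : ℕ} (ha : a ≠ 0) (x : ℝ) :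
    phi (2 * a + 1) x = √2 * sin (a * x) := by
  have hdiv : (2 * a + 1) / 2 = a := by omega
  simp [phi, ha, hdiv]

theorem continuous_phi (k : ℕ) : Continuous (phi k) := by
  unfold phi
  split_ifs <;> fun_prop

theorem abs_phi_le (k : ℕ) (x : ℝ) : |phi k x| ≤ √2 := by
  unfold phi
  split_ifs
  · simp
  · rw [abs_mul, abs_of_nonneg (sqrt_nonneg 2)]
    exact mul_le_of_le_one_right (sqrt_nonneg 2) (abs_cos_le_one _)
  · rw [abs_mul, abs_of_nonneg (sqrt_nonneg 2)]
    exact mul_le_of_le_one_right (sqrt_nonneg 2) (abs_sin_le_one _)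

theorem eq_one_or_eq_two_mul_or_eq_two_mul_add_one {k : ℕ} (hk : k ≠ 0) :
    k = 1 ∨ ∃ a ≠ 0, k = 2 * a ∨ k = 2 * a + 1 := by
  rcases eq_or_ne k 1 with h1 | h1
  · exact .inl h1
  · exact .inr ⟨k / 2, by omega, by omega⟩

theorem fourierCoef_phi_comm (j k : ℕ) : fourierCoef (phi j) k = fourierCoef (phi k) j :=
  integral_congr_ae (.of_forall fun x => mul_comm (phi j x) (phi k x))

theorem fourierCoef_phi_one {k : ℕ} (hk : k ≠ 0) :
    fourierCoef (phi 1) k = if k = 1 then 1 else 0 := by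
  obtain rfl | ⟨a, ha, rfl | rfl⟩ := eq_one_or_eq_two_mul_or_eq_two_mul_add_one hk
  · simp [fourierCoef, phi_one]
  · have hcos := integral_cos_intCast_mul_unif a
    simp_all [fourierCoef, phi_one, phi_two_mul, integral_const_mul]
  · have hsin := integral_sin_intCast_mul_unif a
    simp_all [fourierCoef, phi_one, phi_two_mul_add_one ha, integral_const_mul]

theorem fourierCoef_phi_two_mul {a b : ℕ} (ha : a ≠ 0) :
    fourierCoef (phi (2 * a)) (2 * b) = if a = b then 1 else 0 := by
  have hsub : ((a : ℤ) - b = 0) ↔ a = b := by omega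
  have hadd : ¬ ((a : ℤ) + b = 0) := by omega
  have hcos := integral_cos_mul_cos_unif a b
  simp only [hsub, hadd, Int.cast_natCast, if_false, add_zero] at hcos
  simp only [fourierCoef, phi_two_mul, mul_mul_mul_comm √2 (cos _), mul_self_sqrt zero_le_two,
    integral_const_mul, hcos]
  ring

theorem fourierCoef_phi_two_mul_add_one {a b : ℕ} (ha : a ≠ 0) (hb : b ≠ 0) :
    fourierCoef (phi (2 * a + 1)) (2 * b + 1) = if a = b then 1 else 0 := by
  have hsub : ((a : ℤ) - b = 0) ↔ a = b := by omega
  have hadd : ¬ ((a : ℤ) + b = 0) := by omega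
  have hsin := integral_sin_mul_sin_unif a b
  simp only [hsub, hadd, Int.cast_natCast, if_false, sub_zero] at hsin
  simp only [fourierCoef, phi_two_mul_add_one ha, phi_two_mul_add_one hb,
    mul_mul_mul_comm √2 (sin _), mul_self_sqrt zero_le_two, integral_const_mul, hsin]
  ring

theorem fourierCoef_phi_two_mul_add_one_two_mul {a : ℕ} (ha : a ≠ 0) (b : ℕ) :
    fourierCoef (phi (2 * a + 1)) (2 * b) = 0 := by
  have hsin := integral_sin_mul_cos_unif a b
  simp only [Int.cast_natCast] at hsin
  simp only [fourierCoef, phi_two_mul_add_one ha, phi_two_mul, mul_mul_mul_comm √2 (sin _),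
    integral_const_mul, hsin, mul_zero]

theorem fourierCoef_phi {j k : ℕ} (hj : j ≠ 0) (hk : k ≠ 0) :
    fourierCoef (phi j) k = if k = j then 1 else 0 := by
  obtain rfl | ⟨a, ha, rfl | rfl⟩ := eq_one_or_eq_two_mul_or_eq_two_mul_add_one hj
  · exact fourierCoef_phi_one hk
  all_goals obtain rfl | ⟨b, hb, rfl | rfl⟩ := eq_one_or_eq_two_mul_or_eq_two_mul_add_one hk
  · rw [fourierCoef_phi_comm, fourierCoef_phi_one hj]
    simp only [eq_comm]
  · rw [fourierCoef_phi_two_mul ha]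
    grind
  · rw [fourierCoef_phi_comm, fourierCoef_phi_two_mul_add_one_two_mul hb, if_neg (by omega)]
  · rw [fourierCoef_phi_comm, fourierCoef_phi_one hj]
    simp only [eq_comm]
  · rw [fourierCoef_phi_two_mul_add_one_two_mul ha, if_neg (by omega)]
  · rw [fourierCoef_phi_two_mul_add_one ha hb]
    grind

theorem exists_cos_eq_mul_phi (n : ℤ) : ∃ c, ∃ k ≠ 0, ∀ x : ℝ, cos (n * x) = c * phi k x := by
  rcases eq_or_ne n 0 with rfl | hn
  · exact ⟨1, 1, one_ne_zero, fun x => by simp [phi_one]⟩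
  · refine ⟨(√2)⁻¹, 2 * n.natAbs, by omega, fun x => ?_⟩
    rw [phi_two_mul, inv_mul_cancel_left₀ (by positivity)]
    obtain h | h := n.natAbs_eq <;> rw [h] <;> simp

theorem exists_sin_eq_mul_phi (n : ℤ) : ∃ c, ∃ k ≠ 0, ∀ x : ℝ, sin (n * x) = c * phi k x := by
  rcases eq_or_ne n 0 with rfl | hn
  · exact ⟨0, 1, one_ne_zero, fun x => by simp⟩
  · refine ⟨n.sign * (√2)⁻¹, 2 * n.natAbs + 1, by omega, fun x => ?_⟩
    rw [phi_two_mul_add_one (by omega), mul_assoc, inv_mul_cancel_left₀ (by positivity)]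
    obtain h | h := hn.lt_or_gt
    · simp [Int.sign_eq_neg_one_of_neg h, abs_of_neg (Int.cast_lt_zero.2 h : (n : ℝ) < 0)]
    · simp [Int.sign_eq_one_of_pos h, abs_of_pos (Int.cast_pos.2 h : (0 : ℝ) < n)]

theorem integrable_mul_phi {f : ℝ → ℝ} (hf : Integrable f unif) (k : ℕ) :
    Integrable (fun x => f x * phi k x) unif :=
  hf.mul_bdd (continuous_phi k).aestronglyMeasurable (.of_forall (abs_phi_le k))

theorem fourierCoef_sub {f g : ℝ → ℝ} (hf : Integrable f unif) (hg : Integrable g unif)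
    (k : ℕ) : fourierCoef (fun x => f x - g x) k = fourierCoef f k - fourierCoef g k := by
  simp only [fourierCoef, sub_mul]
  exact integral_sub (integrable_mul_phi hf k) (integrable_mul_phi hg k)

end TrigonometricBasis

section Uniqueness

variable {T : ℝ} [Fact (0 < T)] {μ : Measure ℝ} {f : ℝ → ℂ}

theorem integral_continuousMap_mul_eq_zero (hf : Integrable f μ)
    (hfourier : ∀ n : ℤ, ∫ x, fourier n (x : AddCircle T) * f x ∂μ = 0)
    (F : C(AddCircle T, ℂ)) : ∫ x : ℝ, F (x : AddCircle T) * f x ∂μ = 0 := by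
  have hint (G : C(AddCircle T, ℂ)) : Integrable (fun x : ℝ => G (x : AddCircle T) * f x) μ :=
    hf.bdd_mul (G.continuous.comp (AddCircle.continuous_mk' T)).aestronglyMeasurable
      (.of_forall fun x => G.norm_coe_le_norm x)
  let Φ : C(AddCircle T, ℂ) →L[ℂ] ℂ := LinearMap.mkContinuous
    { toFun := fun G => ∫ x : ℝ, G (x : AddCircle T) * f x ∂μ
      map_add' := fun G H => by
        simp only [ContinuousMap.add_apply, add_mul]
        exact integral_add (hint G) (hint H)
      map_smul' := fun c G => by
        simp only [ContinuousMap.smul_apply, smul_eq_mul, mul_assoc, integral_const_mul,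
          RingHom.id_apply] }
    (∫ x, ‖f x‖ ∂μ) fun G => by
      rw [mul_comm, ← integral_const_mul]
      refine norm_integral_le_of_norm_le (hf.norm.const_mul _) (.of_forall fun x => ?_)
      rw [norm_mul]
      gcongr
      exact G.norm_coe_le_norm x
  have hdense : Dense (Submodule.span ℂ (Set.range (fourier (T := T))) : Set C(AddCircle T, ℂ)) :=
    Submodule.dense_iff_topologicalClosure_eq_top.2 span_fourier_closure_eq_top
  have hΦ : Φ = 0 := by
    refine ContinuousLinearMap.ext_on hdense ?_
    rintro _ ⟨n, rfl⟩
    exact hfourier n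
  exact congrArg (fun Ψ : C(AddCircle T, ℂ) →L[ℂ] ℂ => Ψ F) hΦ

theorem ae_eq_zero_of_integral_fourier_mul_eq_zero (hμ : ∀ᵐ x ∂μ, x ∈ Set.Ioo 0 T)
    (hf : Integrable f μ)
    (hfourier : ∀ n : ℤ, ∫ x, fourier n (x : AddCircle T) * f x ∂μ = 0) : f =ᵐ[μ] 0 := by
  have hzero := isOpen_Ioo.ae_eq_zero_of_integral_contDiff_smul_eq_zero (μ := μ)
    (U := Set.Ioo 0 T) (hf.locallyIntegrable.locallyIntegrableOn _) fun g hg _ hsupp => by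
    have hg_end {x : ℝ} (hx : x ∉ Set.Ioo 0 T) : (g x : ℂ) = 0 := by
      rw [image_eq_zero_of_notMem_tsupport (fun h => hx (hsupp h)), Complex.ofReal_zero]
    let G : C(AddCircle T, ℂ) := ⟨AddCircle.liftIco T 0 fun x => (g x : ℂ),
      AddCircle.liftIco_zero_continuous (by rw [hg_end (by simp), hg_end (by simp)])
        (Complex.continuous_ofReal.comp hg.continuous).continuousOn⟩
    rw [← integral_continuousMap_mul_eq_zero hf hfourier G]
    refine integral_congr_ae ?_
    filter_upwards [hμ] with x hx
    have hGx : G (x : AddCircle T) = g x :=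
      AddCircle.liftIco_zero_coe_apply (f := fun x => (g x : ℂ)) (Set.Ioo_subset_Ico_self hx)
    rw [hGx, Complex.real_smul]
  filter_upwards [hμ, hzero] with x hx hfx using hfx hx

theorem fourier_coe_two_pi (n : ℤ) (x : ℝ) :
    fourier n (x : AddCircle (2 * π)) = (cos (n * x) : ℂ) + (sin (n * x) : ℂ) * Complex.I := by
  have harg : 2 * π * Complex.I * n * x / (2 * π : ℝ) = (n * x : ℝ) * Complex.I := by
    push_cast
    field_simp
  rw [fourier_coe_apply, harg, Complex.exp_mul_I, ← Complex.ofReal_cos, ← Complex.ofReal_sin]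

theorem integral_fourier_mul_eq_zero_of_fourierCoef_eq_zero {h : ℝ → ℝ}
    (hh : Integrable h unif) (hcoef : ∀ k ≠ 0, fourierCoef h k = 0) (n : ℤ) :
    ∫ x, fourier n (x : AddCircle (2 * π)) * (h x : ℂ) ∂unif = 0 := by
  have hzero {u : ℝ → ℝ} (hu : ∃ c, ∃ k ≠ 0, ∀ x, u x = c * phi k x) :
      ∫ x, u x * h x ∂unif = 0 := by
    obtain ⟨c, k, hk, hu⟩ := hu
    simp only [hu, mul_assoc, mul_comm (phi k _), integral_const_mul]
    exact mul_eq_zero_of_right c (hcoef k hk)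
  have hint {u : ℝ → ℝ} (hu : Continuous u) (hu_le : ∀ x, |u x| ≤ 1) :
      Integrable (fun x => ((u x * h x : ℝ) : ℂ)) unif :=
    (hh.bdd_mul hu.aestronglyMeasurable (.of_forall hu_le)).ofReal
  calc ∫ x, fourier n (x : AddCircle (2 * π)) * (h x : ℂ) ∂unif
      = ∫ x, ((cos (n * x) * h x : ℝ) : ℂ) + ((sin (n * x) * h x : ℝ) : ℂ) * Complex.I ∂unif := by
        congr 1 with x
        rw [fourier_coe_two_pi]
        push_cast
        ring
    _ = 0 := by
        rw [integral_add (hint (by fun_prop) fun x => abs_cos_le_one _)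
          ((hint (by fun_prop) fun x => abs_sin_le_one _).mul_const _), integral_mul_const,
          integral_complex_ofReal, integral_complex_ofReal, hzero (exists_cos_eq_mul_phi n),
          hzero (exists_sin_eq_mul_phi n)]
        simp

theorem ae_eq_zero_of_fourierCoef_eq_zero {h : ℝ → ℝ} (hh : Integrable h unif)
    (hcoef : ∀ k ≠ 0, fourierCoef h k = 0) : h =ᵐ[unif] 0 := by
  have : Fact (0 < 2 * π) := ⟨two_pi_pos⟩
  filter_upwards [ae_eq_zero_of_integral_fourier_mul_eq_zero ae_unif_mem_Ioo hh.ofReal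
    (integral_fourier_mul_eq_zero_of_fourierCoef_eq_zero hh hcoef)] with x hx
  exact Complex.ofReal_eq_zero.1 hx

end Uniqueness

section TrigonometricSeries

/-- The trigonometric series `∑_{k ≥ 1} c_k φ_k`. The coefficient sequence is indexed from `0`, so
that `c k` is the coefficient of `φ_{k+1}`; at a point where the series does not converge the value
is `0`. -/
noncomputable def trigSeries (c : ℕ → ℝ) (x : ℝ) : ℝ :=
  ∑' k, c k * phi (k + 1) x

variable {c d : ℕ → ℝ}

theorem norm_mul_phi_le (c : ℕ → ℝ) (k : ℕ) (x : ℝ) : ‖c k * phi (k + 1) x‖ ≤ √2 * |c k| := by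
  rw [norm_mul, mul_comm]
  exact mul_le_mul_of_nonneg_right (abs_phi_le (k + 1) x) (abs_nonneg (c k))

theorem summable_mul_phi (hc : Summable c) (x : ℝ) : Summable fun k => c k * phi (k + 1) x :=
  .of_norm_bounded (hc.abs.mul_left √2) fun k => norm_mul_phi_le c k x

theorem continuous_trigSeries (hc : Summable c) : Continuous (trigSeries c) :=
  continuous_tsum (fun k => (continuous_phi (k + 1)).const_mul (c k)) (hc.abs.mul_left √2)
    (norm_mul_phi_le c)

theorem abs_trigSeries_le (hc : Summable c) (x : ℝ) : |trigSeries c x| ≤ √2 * ∑' k, |c k| :=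
  tsum_of_norm_bounded (hc.abs.hasSum.mul_left √2) fun k => norm_mul_phi_le c k x

theorem eLpNorm_top_trigSeries_le (hc : Summable c) :
    eLpNorm (trigSeries c) ∞ unif ≤ ENNReal.ofReal (√2 * ∑' k, |c k|) :=
  eLpNormEssSup_le_of_ae_bound (.of_forall (abs_trigSeries_le hc))

theorem trigSeries_sub (hc : Summable c) (hd : Summable d) (x : ℝ) :
    trigSeries (c - d) x = trigSeries c x - trigSeries d x := by
  simp only [trigSeries, Pi.sub_apply, sub_mul]
  exact (summable_mul_phi hc x).tsum_sub (summable_mul_phi hd x)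

theorem fourierCoef_trigSeries (hc : Summable c) (j : ℕ) :
    fourierCoef (trigSeries c) (j + 1) = c j := by
  have hle (k : ℕ) (x : ℝ) : ‖c k * phi (k + 1) x * phi (j + 1) x‖ ≤ √2 * |c k| * √2 := by
    rw [norm_mul]
    exact mul_le_mul (norm_mul_phi_le c k x) (abs_phi_le (j + 1) x) (abs_nonneg _) (by positivity)
  have hsum : HasSum (fun k => ∫ x, c k * phi (k + 1) x * phi (j + 1) x ∂unif)
      (fourierCoef (trigSeries c) (j + 1)) :=
    hasSum_integral_of_dominated_convergence (fun k _ => √2 * |c k| * √2)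
      (fun k => (((continuous_phi (k + 1)).const_mul (c k)).mul
        (continuous_phi (j + 1))).aestronglyMeasurable)
      (fun k => .of_forall (hle k)) (.of_forall fun _ => (hc.abs.mul_left √2).mul_right √2)
      (integrable_const _)
      (.of_forall fun x => (summable_mul_phi hc x).hasSum.mul_right (phi (j + 1) x))
  have hterm (k : ℕ) :
      ∫ x, c k * phi (k + 1) x * phi (j + 1) x ∂unif = if k = j then c j else 0 := by
    simp only [mul_assoc, integral_const_mul]
    rw [← fourierCoef, fourierCoef_phi k.succ_ne_zero j.succ_ne_zero]
    grind
  simp only [hterm] at hsum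
  exact hsum.unique (hasSum_ite_eq j (c j))

theorem ae_eq_trigSeries_fourierCoef {f : ℝ → ℝ} (hf : Integrable f unif)
    (hsum : Summable fun k => fourierCoef f (k + 1)) :
    f =ᵐ[unif] trigSeries fun k => fourierCoef f (k + 1) := by
  have hint := integrable_unif_of_continuous (continuous_trigSeries hsum)
  have hdiff := ae_eq_zero_of_fourierCoef_eq_zero (hf.sub hint) fun k hk => by
    obtain ⟨j, rfl⟩ := Nat.exists_eq_succ_of_ne_zero hk
    exact (fourierCoef_sub hf hint _).trans (sub_eq_zero.2 (fourierCoef_trigSeries hsum j).symm)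
  filter_upwards [hdiff] with x hx using sub_eq_zero.1 hx

end TrigonometricSeries

section Projection

theorem summable_indicator_Iio (D : ℕ) (c : ℕ → ℝ) : Summable ((Set.Iio D).indicator c) :=
  summable_of_hasFiniteSupport ((Set.finite_Iio D).subset Set.support_indicator_subset)

theorem trigProj_eq_trigSeries (D : ℕ) (f : ℝ → ℝ) :
    trigProj D f = trigSeries ((Set.Iio D).indicator fun k => fourierCoef f (k + 1)) := by
  funext x
  rw [trigProj, trigSeries, tsum_eq_sum (s := Finset.range D) fun k hk => by simp_all,
    Finset.range_eq_Ico, ← Finset.Ico_add_one_right_eq_Icc, ← zero_add 1,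
    ← Finset.sum_Ico_add' fun k => fourierCoef f k * phi k x]
  refine Finset.sum_congr rfl fun k hk => ?_
  rw [Set.indicator_of_mem (Set.mem_Iio.2 (Finset.mem_Ico.1 hk).2)]

theorem fourierCoef_trigProj (D : ℕ) (f : ℝ → ℝ) (k : ℕ) :
    fourierCoef (trigProj D f) (k + 1) =
      (Set.Iio D).indicator (fun k => fourierCoef f (k + 1)) k := by
  rw [trigProj_eq_trigSeries, fourierCoef_trigSeries (summable_indicator_Iio D _)]

theorem abs_fourierCoef_trigProj_le (D : ℕ) (f : ℝ → ℝ) (k : ℕ) :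
    |fourierCoef (trigProj D f) (k + 1)| ≤ |fourierCoef f (k + 1)| := by
  rw [fourierCoef_trigProj]
  exact norm_indicator_le_norm_self (fun k => fourierCoef f (k + 1)) k

theorem sub_trigProj_ae_eq_trigSeries {f : ℝ → ℝ} (hf : Integrable f unif)
    (hsum : Summable fun k => fourierCoef f (k + 1)) (D : ℕ) :
    (fun x => f x - trigProj D f x) =ᵐ[unif]
      trigSeries ((Set.Ici D).indicator fun k => fourierCoef f (k + 1)) := by
  filter_upwards [ae_eq_trigSeries_fourierCoef hf hsum] with x hx
  rw [hx, trigProj_eq_trigSeries, ← trigSeries_sub hsum (summable_indicator_Iio D _),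
    ← Set.compl_Iio, Set.indicator_compl]

theorem eLpNorm_sub_trigProj_le {w : ℕ → ℝ} (hw : Monotone w) (hw_pos : 0 < w 0)
    {f : ℝ → ℝ} (hf : Integrable f unif)
    (hsum : Summable fun k => w k * |fourierCoef f (k + 1)|) (D : ℕ) :
    eLpNorm (fun x => f x - trigProj D f x) ∞ unif ≤
      ENNReal.ofReal (√2 * (∑' k, w k * |fourierCoef f (k + 1)|) / w D) := by
  have hcoef := summable_of_summable_mul_abs hw hw_pos hsum
  rw [eLpNorm_congr_ae (sub_trigProj_ae_eq_trigSeries hf hcoef D)]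
  refine (eLpNorm_top_trigSeries_le (hcoef.indicator _)).trans (ENNReal.ofReal_le_ofReal ?_)
  rw [mul_div_assoc]
  gcongr
  rw [le_div_iff₀' (hw_pos.trans_le (hw D.zero_le))]
  exact mul_tsum_abs_indicator_Ici_le hw hw_pos.le hsum D

theorem continuous_trigProj (D : ℕ) (f : ℝ → ℝ) : Continuous (trigProj D f) := by
  rw [trigProj_eq_trigSeries]
  exact continuous_trigSeries (summable_indicator_Iio D _)

theorem eLpNorm_trigProj_ne_top (D : ℕ) (f : ℝ → ℝ) : eLpNorm (trigProj D f) ∞ unif ≠ ∞ := by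
  rw [trigProj_eq_trigSeries]
  exact ne_top_of_le_ne_top ENNReal.ofReal_ne_top
    (eLpNorm_top_trigSeries_le (summable_indicator_Iio D _))

end Projection

theorem trig_projection_of_Lambda_general (ν L₁ L₂ : ℝ) (hν : 0 < ν) (hL₁ : 0 < L₁)
    (hL₂ : 0 < L₂) (D : ℕ) (hD : (2 * √2 * L₁ / L₂) ^ (1 / ν) ≤ (D : ℝ))
    (s : ℝ → ℝ) (hs : Integrable s unif)
    (hs_sum : Summable fun k : ℕ => ((k + 1 : ℕ) : ℝ) ^ ν * |fourierCoef s (k + 1)|)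
    (hs_L₁ : (∑' k : ℕ, ((k + 1 : ℕ) : ℝ) ^ ν * |fourierCoef s (k + 1)|) ≤ L₁)
    (hs_L₂ : L₂ ≤ (eLpNorm s ∞ unif).toReal) :
    (eLpNorm (fun x => s x - trigProj D s x) ∞ unif).toReal ≤ √2 * L₁ / (D : ℝ) ^ ν ∧
      √2 * L₁ / (D : ℝ) ^ ν ≤ L₂ / 2 ∧
      L₂ / 2 ≤ (eLpNorm (trigProj D s) ∞ unif).toReal ∧
      Summable (fun k : ℕ => ((k + 1 : ℕ) : ℝ) ^ ν * |fourierCoef (trigProj D s) (k + 1)|) ∧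
      (∑' k : ℕ, ((k + 1 : ℕ) : ℝ) ^ ν * |fourierCoef (trigProj D s) (k + 1)|) ≤ L₁ := by
  have hD_pos : (0 : ℝ) < D := (rpow_pos_of_pos (by positivity) _).trans_le hD
  have hsub : eLpNorm (fun x => s x - trigProj D s x) ∞ unif ≤
      ENNReal.ofReal (√2 * L₁ / (D : ℝ) ^ ν) := by
    refine (eLpNorm_sub_trigProj_le (monotone_natCast_succ_rpow hν.le) (by simp) hs hs_sum
      D).trans (ENNReal.ofReal_le_ofReal ?_)
    gcongr
    exact D.le_succ
  have hsub_toReal := ENNReal.toReal_le_of_le_ofReal (by positivity) hsub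
  have hhalf : √2 * L₁ / (D : ℝ) ^ ν ≤ L₂ / 2 :=
    div_rpow_le_of_rpow_one_div_le (by positivity) (by positivity) hν
      (by convert hD using 2; field_simp)
  have htriangle := toReal_eLpNorm_le_sub_add le_top hs.1
    (continuous_trigProj D s).aestronglyMeasurable
    (ne_top_of_le_ne_top ENNReal.ofReal_ne_top hsub) (eLpNorm_trigProj_ne_top D s)
  have hcoef_le (k : ℕ) : ((k + 1 : ℕ) : ℝ) ^ ν * |fourierCoef (trigProj D s) (k + 1)| ≤
      ((k + 1 : ℕ) : ℝ) ^ ν * |fourierCoef s (k + 1)| :=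
    mul_le_mul_of_nonneg_left (abs_fourierCoef_trigProj_le D s k) (by positivity)
  have hsum := hs_sum.of_nonneg_of_le (fun k => by positivity) hcoef_le
  exact ⟨hsub_toReal, hhalf, by linarith, hsum, (hsum.tsum_le_tsum hcoef_le hs_sum).trans hs_L₁⟩

/-- Fix `ν > 0`, `L₁, L₂ > 0`, `D ≥ (2√2 L₁/L₂)^{1/ν}`, let
`s* ∈ Λ_ν(L₁, L₂)` and let `s_m` be its projection onto the span of the first `D`
trigonometric basis functions. Then `‖s* - s_m‖_∞ ≤ √2 L₁ / D^ν ≤ L₂/2`,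
`‖s_m‖_∞ ≥ L₂/2` and `s_m ∈ Λ_ν(L₁, L₂/2)`. -/
theorem trig_projection_of_Lambda (ν L₁ L₂ : ℝ) (hν : 0 < ν) (hL₁ : 0 < L₁) (hL₂ : 0 < L₂)
    (D : ℕ) (hD : (2 * Real.sqrt 2 * L₁ / L₂) ^ ((1 : ℝ) / ν) ≤ (D : ℝ))
    (s : ℝ → ℝ) (hs_meas : Measurable s) (hs_bdd : MemLp s ∞ unif)
    (hs_sum : Summable fun k : ℕ => ((k + 1 : ℕ) : ℝ) ^ ν * |fourierCoef s (k + 1)|)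
    (hs_L₁ : (∑' k : ℕ, ((k + 1 : ℕ) : ℝ) ^ ν * |fourierCoef s (k + 1)|) ≤ L₁)
    (hs_L₂ : L₂ ≤ (eLpNorm s ∞ unif).toReal) :
    (eLpNorm (fun x => s x - trigProj D s x) ∞ unif).toReal ≤
        Real.sqrt 2 * L₁ / (D : ℝ) ^ ν ∧
      Real.sqrt 2 * L₁ / (D : ℝ) ^ ν ≤ L₂ / 2 ∧
      L₂ / 2 ≤ (eLpNorm (trigProj D s) ∞ unif).toReal ∧
      Summable (fun k : ℕ => ((k + 1 : ℕ) : ℝ) ^ ν * |fourierCoef (trigProj D s) (k + 1)|) ∧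
      (∑' k : ℕ, ((k + 1 : ℕ) : ℝ) ^ ν * |fourierCoef (trigProj D s) (k + 1)|) ≤ L₁ :=
  trig_projection_of_Lambda_general ν L₁ L₂ hν hL₁ hL₂ D hD s (hs_bdd.integrable le_top)
    hs_sum hs_L₁ hs_L₂
end
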